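/- (Proposition 2, equality.) Let H be a real M × n matrix such that every collection of n rows of H is linearly independent (in particular H has full column rank n ≤ M). Then the measurement distance of the linear mapping x ↦ Hx satisfies D := min over x ≠ 0 in ℝ^n of ‖Hx‖₀ = M − n + 1 = M + 1 − rank(H). -/

import Mathlib

/-- The ℓ0-pseudonorm: number of nonzero entries of a vector in ℝ^M. -/
noncomputable def l0 {M : ℕ} (a : Fin M → ℝ) : ℕ :=
  (Finset.univ.filter fun i => a i ≠ 0).card

/-!
Any `n` rows of `H` form an invertible matrix, so for `x ≠ 0` at most `n - 1` entries of `Hx`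
vanish. Conversely, requiring `n - 1` chosen entries of `Hx` to vanish is an underdetermined
homogeneous system in `x`, which has a nonzero solution.
-/

section

open Finset Matrix
open Fintype (card)

theorem card_filter_eq_zero_add_hammingNorm {ι : Type*} {β : ι → Type*} [Fintype ι]
    [∀ i, Zero (β i)] [∀ i, DecidableEq (β i)] (a : ∀ i, β i) :
    #{i | a i = 0} + hammingNorm a = card ι :=
  card_filter_add_card_filter_not fun i => a i = 0

variable {K m n : Type*} [Field K] [Fintype n]

theorem mulVec_injective_of_rank_eq_card {A : Matrix m n K} (hA : A.rank = card n) :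
    Function.Injective A.mulVec := by
  rw [mulVec_injective_iff, linearIndependent_iff_card_eq_finrank_span, ← hA]
  exact A.rank_eq_finrank_span_cols

variable {H : Matrix m n K}

theorem rank_submatrix_of_linearIndependent {s : Finset m}
    (hs : LinearIndependent K fun i : s => H i) :
    (H.submatrix ((↑) : s → m) id).rank = #s :=
  (LinearIndependent.rank_matrix hs).trans (Fintype.card_coe s)

theorem eq_zero_of_forall_mem_mulVec_eq_zero {s : Finset m}
    (hs : LinearIndependent K fun i : s => H i) (hcard : #s = card n) {x : n → K}
    (hx : ∀ i ∈ s, (H *ᵥ x) i = 0) : x = 0 := by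
  have hinj : Function.Injective (H.submatrix ((↑) : s → m) id).mulVec :=
    mulVec_injective_of_rank_eq_card ((rank_submatrix_of_linearIndependent hs).trans hcard)
  apply hinj
  rw [mulVec_zero]
  exact funext fun i => hx i i.2

variable [Fintype m]

theorem exists_ne_zero_hammingNorm_mulVec_add_le [DecidableEq K] (H : Matrix m n K) {k : ℕ}
    (hkn : k < card n) (hkm : k ≤ card m) : ∃ x ≠ 0, hammingNorm (H *ᵥ x) + k ≤ card m := by
  obtain ⟨t, -, rfl⟩ := exists_subset_card_eq (s := (univ : Finset m)) hkm
  have hker : (H.submatrix ((↑) : t → m) id).mulVecLin.ker ≠ ⊥ :=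
    LinearMap.ker_ne_bot_of_finrank_lt (by simpa using hkn)
  obtain ⟨x, hx, hx0⟩ := (Submodule.ne_bot_iff _).mp hker
  have ht : t ⊆ ({i | (H *ᵥ x) i = 0} : Finset m) := fun i hi =>
    mem_filter_univ i |>.mpr (congrFun (LinearMap.mem_ker.mp hx) ⟨i, hi⟩)
  refine ⟨x, hx0, ?_⟩
  rw [← card_filter_eq_zero_add_hammingNorm (H *ᵥ x), add_comm]
  gcongr

theorem card_lt_hammingNorm_mulVec_add_card [DecidableEq K]
    (hrows : ∀ s : Finset m, #s = card n → LinearIndependent K fun i : s => H i)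
    {x : n → K} (hx : x ≠ 0) : card m < hammingNorm (H *ᵥ x) + card n := by
  have hzeros : #{i | (H *ᵥ x) i = 0} < card n := by
    by_contra! hle
    obtain ⟨s, hs, hcard⟩ := exists_subset_card_eq hle
    exact hx (eq_zero_of_forall_mem_mulVec_eq_zero (hrows s hcard) hcard fun i hi =>
      (mem_filter_univ i).mp (hs hi))
  rw [← card_filter_eq_zero_add_hammingNorm (H *ᵥ x), add_comm]
  gcongr

theorem rank_eq_card_of_linearIndependent_rows
    (hrows : ∀ s : Finset m, #s = card n → LinearIndependent K fun i : s => H i)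
    (hcard : card n ≤ card m) : H.rank = card n := by
  obtain ⟨s, -, hs⟩ := exists_subset_card_eq (s := (univ : Finset m)) hcard
  apply H.rank_le_card_width.antisymm
  calc card n = (H.submatrix ((↑) : s → m) id).rank := by
        rw [rank_submatrix_of_linearIndependent (hrows s hs), hs]
    _ ≤ H.rank := H.rank_submatrix_le _ _

theorem isLeast_hammingNorm_mulVec [DecidableEq K] [Nonempty n]
    (hrows : ∀ s : Finset m, #s = card n → LinearIndependent K fun i : s => H i)
    (hcard : card n ≤ card m) :
    IsLeast {d | ∃ x ≠ 0, hammingNorm (H *ᵥ x) = d} (card m - card n + 1) := by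
  have hlower : card m - card n + 1 ∈ lowerBounds {d | ∃ x ≠ 0, hammingNorm (H *ᵥ x) = d} := by
    rintro _ ⟨x, hx, rfl⟩
    have hlt := card_lt_hammingNorm_mulVec_add_card hrows hx
    lia
  have hpos : 0 < card n := Fintype.card_pos
  obtain ⟨x, hx, hupper⟩ :=
    exists_ne_zero_hammingNorm_mulVec_add_le H (k := card n - 1) (by lia) (by lia)
  exact ⟨⟨x, hx, le_antisymm (by lia) (hlower ⟨x, hx, rfl⟩)⟩, hlower⟩

theorem linear_measurement_distance_eq_general [DecidableEq K] (hcard : card n ≤ card m)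
    (H : Matrix m n K)
    (hrows : ∀ s : Finset m, #s = card n → LinearIndependent K fun i : s => H i) {D : ℕ}
    (hD : IsLeast {d | ∃ x ≠ 0, hammingNorm (H *ᵥ x) = d} D) :
    D = card m - card n + 1 ∧ D = card m + 1 - H.rank := by
  obtain ⟨x, hx, -⟩ := hD.1
  have : Nonempty n := (Function.ne_iff.mp hx).nonempty
  have hDeq : D = card m - card n + 1 := hD.unique (isLeast_hammingNorm_mulVec hrows hcard)
  refine ⟨hDeq, ?_⟩
  rw [rank_eq_card_of_linearIndependent_rows hrows hcard]
  lia

end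

theorem l0_eq_hammingNorm {M : ℕ} (a : Fin M → ℝ) : l0 a = hammingNorm a :=
  rfl

/-- Proposition 2 (equality): if every collection of `n` rows of the real `M × n`
matrix `H` is linearly independent (`n ≤ M`), then the measurement distance
`D = min_{x ≠ 0} ‖Hx‖₀` of `x ↦ Hx` equals `M − n + 1 = M + 1 − rank(H)`. -/
theorem linear_measurement_distance_eq {M n : ℕ} (hn : 1 ≤ n) (hnM : n ≤ M)
    (H : Matrix (Fin M) (Fin n) ℝ)
    (hrows : ∀ s : Finset (Fin M), s.card = n →
      LinearIndependent ℝ (fun i : s => H i)) (D : ℕ)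
    (hDle : ∀ x : Fin n → ℝ, x ≠ 0 → D ≤ l0 (H.mulVec x))
    (hDeq : ∃ x : Fin n → ℝ, x ≠ 0 ∧ l0 (H.mulVec x) = D) :
    D = M - n + 1 ∧ D = M + 1 - H.rank := by
  simp only [l0_eq_hammingNorm] at hDle hDeq
  simpa using linear_measurement_distance_eq_general (by simpa using hnM) H (by simpa using hrows)
    ⟨hDeq, fun _ ⟨x, hx, hxd⟩ => hxd ▸ hDle x hx⟩
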